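/- arXiv:2305.02967 — 2 statements merged into one kernel-verified Lean document; each statement's English description precedes it below -/
import Mathlib

section
/- Longer-word case of palindrome separation: let Σ be any type, let u, u' : List Σ be words with u.length < u'.length, and let a : Σ be any letter different from the element of u' at position u.length (0-indexed). Then u ++ [a, a] ++ reverse u ∈ O_pal, while u' ++ [a, a] ++ reverse u ∉ O_pal. -/
/-- The language of even-length palindromes over `α`. -/
def Opal (α : Type*) : Set (List α) :=
  {x : List α | ∃ w : List α, x = w ++ w.reverse}

section

variable {α : Type*} {x : List α}

theorem palindrome_of_mem_opal (hx : x ∈ Opal α) : x.Palindrome := by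
  obtain ⟨w, rfl⟩ := hx
  exact List.Palindrome.append_reverse w

theorem append_append_reverse_mem_opal (u : List α) (hx : x ∈ Opal α) :
    u ++ x ++ u.reverse ∈ Opal α := by
  obtain ⟨w, rfl⟩ := hx
  exact ⟨u ++ w, by simp only [List.reverse_append, List.append_assoc]⟩

theorem prefix_of_palindrome_of_reverse_suffix {t : List α} (hx : x.Palindrome)
    (ht : t.reverse <:+ x) : t <+: x := by
  rw [← List.reverse_suffix, hx.reverse_eq]
  exact ht

theorem prefix_of_palindrome_append_append_reverse {v s t : List α}
    (hpal : (v ++ s ++ t.reverse).Palindrome) (hlen : t.length ≤ v.length) : t <+: v :=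
  List.prefix_of_prefix_length_le
    (prefix_of_palindrome_of_reverse_suffix hpal (List.suffix_append _ _))
    ((List.prefix_append v s).trans (List.prefix_append _ _)) hlen

end

/-- Longer-word case of palindrome separation. -/
theorem palindrome_separates_longer (α : Type*) (u u' : List α)
    (hlen : u.length < u'.length) (a : α) (ha : a ≠ u'.get ⟨u.length, hlen⟩) :
    u ++ [a, a] ++ u.reverse ∈ Opal α ∧ u' ++ [a, a] ++ u.reverse ∉ Opal α := by
  refine ⟨append_append_reverse_mem_opal u ⟨[a], rfl⟩, fun hmem => ha ?_⟩
  have hpal : (u' ++ [a] ++ (u ++ [a]).reverse).Palindrome := by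
    simpa using palindrome_of_mem_opal hmem
  have hprefix : u ++ [a] <+: u' :=
    prefix_of_palindrome_append_append_reverse hpal (by simpa using hlen)
  calc
    a = (u ++ [a])[u.length]'(by simp) := (List.getElem_concat_length rfl _).symm
    _ = u'.get ⟨u.length, hlen⟩ := hprefix.getElem _
end

section
/- The syntactic congruence of the path language has at most |Q|² + 2 classes: let Q be a finite type with initial state q₀ ∈ Q and final states F ⊆ Q, and let L be the associated path language over the alphabet Q × Q. Let ≈ be the syntactic congruence of L on List (Q × Q), defined by x ≈ y iff for all u, v : List (Q × Q), u ++ x ++ v ∈ L ↔ u ++ y ++ v ∈ L. Then the quotient of List (Q × Q) by ≈ has at most (card Q)^2 + 2 elements. -/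
/-- The path language over the alphabet `Q × Q` of state pairs: a word belongs
to it iff it is empty and `q0 ∈ F`, or it is nonempty, starts in `q0`, its
adjacent letters are continuous, and it ends in a final state. -/
def PathLang {Q : Type*} (q0 : Q) (F : Set Q) : Set (List (Q × Q)) :=
  {x : List (Q × Q) |
    (x = [] ∧ q0 ∈ F) ∨
    (∃ h : x ≠ [],
      (x.head h).1 = q0 ∧
      x.Chain' (fun p q => p.2 = q.1) ∧
      (x.getLast h).2 ∈ F)}

/-- The syntactic congruence of the path language. -/
def synSetoid {Q : Type*} (q0 : Q) (F : Set Q) : Setoid (List (Q × Q)) where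
  r x y := ∀ u v : List (Q × Q), u ++ x ++ v ∈ PathLang q0 F ↔ u ++ y ++ v ∈ PathLang q0 F
  iseqv := by
    refine ⟨fun x u v => Iff.rfl, fun h u v => (h u v).symm,
      fun h1 h2 u v => (h1 u v).trans (h2 u v)⟩

/-! Let a word `x` act on states by the relation `runRel x` of being joined by a run labelled `x`.
Concatenation becomes composition, and `runRel x` determines whether `x` is in `PathLang q₀ F`, so
words inducing the same relation are congruent. Each letter allows a single move, so a nonempty word
relates at most one pair: only the identity, the empty relation and the `|Q|²` singletons occur. -/

open scoped Cardinal SetRel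

theorem singleton_comp_singleton_subset {α β γ : Type*} (a : α × β) (b : β × γ) :
    SetRel.comp {a} {b} ⊆ {(a.1, b.2)} := by
  rintro ⟨p, r⟩ ⟨q, rfl, rfl⟩
  rfl

namespace PathLang

variable {Q : Type*} {q₀ : Q} {F : Set Q} {a : Q × Q} {x : List (Q × Q)}

theorem nil_mem_iff : [] ∈ PathLang q₀ F ↔ q₀ ∈ F := by
  simp [PathLang]

theorem cons_mem_iff_isChain :
    a :: x ∈ PathLang q₀ F ↔ a.1 = q₀ ∧ (a :: x).IsChain (fun p q => p.2 = q.1) ∧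
      ((a :: x).getLast (x.cons_ne_nil a)).2 ∈ F :=
  ⟨fun | .inr ⟨_, h⟩ => h, fun h => .inr ⟨x.cons_ne_nil a, h⟩⟩

theorem cons_mem_iff : a :: x ∈ PathLang q₀ F ↔ a.1 = q₀ ∧ x ∈ PathLang a.2 F := by
  cases x with
  | nil => simp [cons_mem_iff_isChain, nil_mem_iff]
  | cons b x => simp [cons_mem_iff_isChain, and_assoc, eq_comm (a := a.2)]

/-- The transition relation of the word `x`: `(p, q) ∈ runRel x` iff `x` labels a run from `p` to
`q` in the automaton where a letter `a` only allows the move from `a.1` to `a.2`. -/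
def runRel : List (Q × Q) → SetRel Q Q
  | [] => SetRel.id
  | a :: x => SetRel.comp {a} (runRel x)

theorem runRel_append (x y : List (Q × Q)) : runRel (x ++ y) = runRel x ○ runRel y := by
  induction x with
  | nil => simp [runRel]
  | cons a x ih => simp only [List.cons_append, runRel, ih, SetRel.comp_assoc]

theorem mem_iff_exists_runRel : x ∈ PathLang q₀ F ↔ ∃ q ∈ F, q₀ ~[runRel x] q := by
  induction x generalizing q₀ with
  | nil => simp [nil_mem_iff, runRel]
  | cons a x ih => simp [cons_mem_iff, ih, runRel, Prod.ext_iff, eq_comm (a := a.1), and_left_comm]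

theorem ker_runRel_le_synSetoid (q₀ : Q) (F : Set Q) : Setoid.ker runRel ≤ synSetoid q₀ F := by
  intro x y (hxy : runRel x = runRel y) u v
  simp only [mem_iff_exists_runRel, runRel_append, hxy]

theorem range_runRel_subset :
    Set.range (runRel (Q := Q)) ⊆ insert SetRel.id (insert ∅ (Set.range singleton)) := by
  rintro _ ⟨x, rfl⟩
  induction x with
  | nil => exact .inl rfl
  | cons a x ih =>
    obtain hid | hempty | ⟨b, hb⟩ := ih
    · exact .inr (.inr ⟨a, by simp [runRel, hid]⟩)
    · exact .inr (.inl (by simp [runRel, hempty]))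
    · rw [runRel, ← hb]
      obtain hempty | hsingleton :=
        Set.subset_singleton_iff_eq.mp (singleton_comp_singleton_subset a b)
      · exact .inr (.inl hempty)
      · exact .inr (.inr ⟨(a.1, b.2), hsingleton.symm⟩)

theorem mk_range_runRel_le (Q : Type*) : #(Set.range (runRel (Q := Q))) ≤ #Q ^ 2 + 2 :=
  calc #(Set.range (runRel (Q := Q)))
      ≤ #(insert SetRel.id (insert ∅ (Set.range singleton)) : Set (SetRel Q Q)) :=
        Cardinal.mk_le_mk_of_subset range_runRel_subset
    _ ≤ #(insert ∅ (Set.range singleton) : Set (SetRel Q Q)) + 1 := Cardinal.mk_insert_le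
    _ ≤ #(Set.range (singleton : Q × Q → SetRel Q Q)) + 1 + 1 := by
        gcongr; exact Cardinal.mk_insert_le
    _ ≤ #(Q × Q) + 1 + 1 := by gcongr; exact Cardinal.mk_range_le
    _ = #Q ^ 2 + 2 := by simp [sq, add_assoc, one_add_one_eq_two]

end PathLang

theorem pathLang_syntactic_monoid_card_general {Q : Type*} (q₀ : Q) (F : Set Q) :
    #(Quotient (synSetoid q₀ F)) ≤ #Q ^ 2 + 2 :=
  calc #(Quotient (synSetoid q₀ F))
      ≤ #(Quotient (Setoid.ker PathLang.runRel)) :=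
        Cardinal.mk_le_of_surjective
          (Quotient.map_surjective (PathLang.ker_runRel_le_synSetoid q₀ F) Function.surjective_id)
    _ = #(Set.range PathLang.runRel) :=
        (Setoid.quotientKerEquivRange PathLang.runRel).cardinal_eq
    _ ≤ #Q ^ 2 + 2 := PathLang.mk_range_runRel_le Q

/-- The syntactic congruence of the path language has at most `|Q|² + 2`
classes. -/
theorem pathLang_syntactic_monoid_card (Q : Type*) [Fintype Q] (q0 : Q) (F : Set Q) :
    Nat.card (Quotient (synSetoid q0 F)) ≤ Fintype.card Q ^ 2 + 2 := by
  have h : #(Quotient (synSetoid q0 F)) ≤ (Fintype.card Q ^ 2 + 2 : ℕ) := by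
    simpa using pathLang_syntactic_monoid_card_general q0 F
  simpa only [Nat.card, Cardinal.toNat_natCast] using
    Cardinal.toNat_le_toNat h Cardinal.natCast_lt_aleph0
end
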